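/- Reparametrisation lemma: Let γ : E × S¹ → F be a smooth family of loops and g : E → F a smooth function such that γ_x surrounds g(x) for every x. Then there exists a smooth family of circle diffeomorphisms φ_x : S¹ → S¹ with φ_x(0) = 0 such that the average of γ_x ∘ φ_x equals g(x) for all x. -/

import Mathlib

open scoped ContDiff

/-- `f` surrounds `v`: there is an affine basis of `F` contained in the image of `f`
with respect to which `v` has strictly positive barycentric coordinates. -/
def LoopSurrounds {F : Type*} [NormedAddCommGroup F] [NormedSpace ℝ F]
    (f : ℝ → F) (v : F) : Prop :=
  ∃ (p : Fin (Module.finrank ℝ F + 1) → F) (w : Fin (Module.finrank ℝ F + 1) → ℝ),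
    (∀ i, p i ∈ Set.range f) ∧ AffineIndependent ℝ p ∧
      affineSpan ℝ (Set.range p) = ⊤ ∧ (∀ i, 0 < w i) ∧
      ∑ i, w i = 1 ∧ ∑ i, w i • p i = v

/-!
Put `h x = γ x - g x`. That `γ x` surrounds `g x` says that `0` is interior to the convex hull of
the loop `h x`, so the convex function `l ↦ ∫₀¹ exp (l (h x t)) dt` on the dual of `F` is coercive,
and its gradient `∫₀¹ exp (l (h x t)) h x t dt` is injective with invertible derivative. The
gradient therefore vanishes at exactly one `l x`, which depends smoothly on `x` by the implicit
function theorem. Normalising `exp (l x (h x t))` gives a smooth positive density on the circle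
under which `γ x` has mean `g x`. The inverse `φ x` of its primitive is the required
diffeomorphism, as the substitution `t = φ x s` turns this mean into the average of `γ x ∘ φ x`.
-/

open Filter Function MeasureTheory Set
open scoped Convolution Pointwise Topology

section ParametricIntegral

variable {G : Type*} [NormedAddCommGroup G] [NormedSpace ℝ G]
  {μ : Measure ℝ} [IsLocallyFiniteMeasure μ]

theorem hasDerivAt_intervalIntegral_of_continuous_deriv {f f' : ℝ → ℝ → G}
    (hf : ∀ x, Continuous (f x)) (hf' : Continuous ↿f')
    (hderiv : ∀ x t, HasDerivAt (f · t) (f' x t) x) (a b x₀ : ℝ) :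
    HasDerivAt (fun x ↦ ∫ t in a..b, f x t ∂μ) (∫ t in a..b, f' x₀ t ∂μ) x₀ := by
  have hf'x : Continuous (f' x₀) := hf'.comp (Continuous.prodMk_right x₀)
  obtain ⟨C, hC⟩ := isCompact_uIcc.exists_bound_of_continuousOn (s := uIcc a b) hf'x.continuousOn
  have hbound : ∀ᶠ x in 𝓝 x₀, ∀ t ∈ uIcc a b, ‖f' x t‖ < C + 1 :=
    isCompact_uIcc.eventually_forall_of_forall_eventually fun t ht ↦
      hf'.norm.continuousAt.eventually_lt continuousAt_const ((hC t ht).trans_lt (lt_add_one C))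
  exact (intervalIntegral.hasDerivAt_integral_of_dominated_loc_of_deriv_le hbound
    (.of_forall fun x ↦ (hf x).aestronglyMeasurable) ((hf x₀).intervalIntegrable a b)
    hf'x.aestronglyMeasurable
    (.of_forall fun t ht x hx ↦ (hx t (uIoc_subset_uIcc ht)).le) intervalIntegrable_const
    (.of_forall fun t _ x _ ↦ hderiv x t)).2

variable {X : Type*} [NormedAddCommGroup X] [NormedSpace ℝ X]

/- Inserting a bump function turns the integral into the value at `0` of the convolution of the
indicator function of `s` with a compactly supported function. -/
theorem contDiff_setIntegral {D : Type*} [NormedAddCommGroup D] [NormedSpace ℝ D]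
    [FiniteDimensional ℝ D] [MeasurableSpace D] [BorelSpace D] {μ : Measure D}
    [IsLocallyFiniteMeasure μ] {n : ℕ∞} {f : X → D → G} (hf : ContDiff ℝ n ↿f) {s : Set D}
    (hs : MeasurableSet s) (hbdd : Bornology.IsBounded s) :
    ContDiff ℝ n fun x ↦ ∫ t in s, f x t ∂μ := by
  obtain ⟨R, hR, hsR⟩ := hbdd.subset_closedBall_lt 0 0
  let χ : ContDiffBump (0 : D) := ⟨R, R + 1, hR, lt_add_one R⟩
  have hconv (x : X) : ∫ t in s, f x t ∂μ =
      (s.indicator 1 ⋆[ContinuousLinearMap.lsmul ℝ ℝ, μ] fun t ↦ χ t • f x (-t)) 0 := by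
    rw [convolution_lsmul, ← integral_indicator hs]
    congr with t
    by_cases ht : t ∈ s
    · have hχ : χ (-t) = 1 := χ.one_of_mem_closedBall (by simpa using hsR ht)
      simp [ht, hχ]
    · simp [ht]
  have hind : LocallyIntegrable (s.indicator (1 : D → ℝ)) μ :=
    (locallyIntegrable_const 1).indicator hs
  simp_rw [hconv, ← contDiffOn_univ]
  refine contDiffOn_convolution_right_with_param_comp _ contDiffOn_const isOpen_univ
    χ.hasCompactSupport (fun x t _ ht ↦ ?_) hind (ContDiff.contDiffOn ?_)
  · rw [image_eq_zero_of_notMem_tsupport ht, zero_smul]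
  · exact (χ.contDiff.comp contDiff_snd).smul
      (hf.comp (f := fun q : X × D ↦ (q.1, -q.2)) (by fun_prop))

theorem contDiff_intervalIntegral {n : ℕ∞} {f : X → ℝ → G} (hf : ContDiff ℝ n ↿f) (a b : ℝ) :
    ContDiff ℝ n fun x ↦ ∫ t in a..b, f x t ∂μ := by
  simp only [intervalIntegral.intervalIntegral_eq_integral_uIoc]
  have hbdd : Bornology.IsBounded (uIoc a b) := isCompact_uIcc.isBounded.subset uIoc_subset_uIcc
  exact (contDiff_setIntegral hf measurableSet_uIoc hbdd).const_smul _

end ParametricIntegral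

theorem contDiff_intervalIntegral_right {X G : Type*} [NormedAddCommGroup X] [NormedSpace ℝ X]
    [NormedAddCommGroup G] [NormedSpace ℝ G] {n : ℕ∞} {f : X → ℝ → G}
    (hf : ContDiff ℝ n ↿f) : ContDiff ℝ n ↿fun x t ↦ ∫ s in 0..t, f x s := by
  have hscale : (↿fun x t ↦ ∫ s in 0..t, f x s) =
      fun q : X × ℝ ↦ q.2 • ∫ u in 0..1, f q.1 (q.2 * u) := by
    ext q
    simp [HasUncurry.uncurry]
  rw [hscale]
  refine contDiff_snd.smul (contDiff_intervalIntegral (μ := volume)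
    (f := fun (q : X × ℝ) (u : ℝ) ↦ f q.1 (q.2 * u)) ?_ 0 1)
  exact hf.comp (f := fun r : (X × ℝ) × ℝ ↦ (r.1.1, r.1.2 * r.2)) (by fun_prop)

section Implicit

variable {𝕜 X Y Z : Type*} [RCLike 𝕜]
  [NormedAddCommGroup X] [NormedSpace 𝕜 X] [CompleteSpace X]
  [NormedAddCommGroup Y] [NormedSpace 𝕜 Y] [CompleteSpace Y]
  [NormedAddCommGroup Z] [NormedSpace 𝕜 Z] [CompleteSpace Z] {n : ℕ∞ω}

theorem contDiff_of_forall_apply_eq_iff {f : X → Y → Z} {z : Z} {y : X → Y} (hn : n ≠ 0)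
    (hf : ContDiff 𝕜 n ↿f) (hy : ∀ x y', f x y' = z ↔ y' = y x)
    (hinv : ∀ x, (fderiv 𝕜 (f x) (y x)).IsInvertible) : ContDiff 𝕜 n y := by
  refine contDiff_iff_contDiffAt.2 fun x ↦ ?_
  have hpartial : fderiv 𝕜 ↿f (x, y x) ∘L .inr 𝕜 X Y = fderiv 𝕜 (f x) (y x) :=
    ((hf.differentiable hn (x, y x)).hasFDerivAt.comp (y x)
      (hasFDerivAt_prodMk_right x (y x))).fderiv.symm
  have hinv' : (fderiv 𝕜 ↿f (x, y x) ∘L .inr 𝕜 X Y).IsInvertible := hpartial ▸ hinv x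
  have hfx : ContDiffAt 𝕜 n ↿f (x, y x) := hf.contDiffAt
  refine (hfx.contDiffAt_implicitFunction hn hinv').congr_of_eventuallyEq ?_
  filter_upwards [hfx.eventually_apply_implicitFunction hn hinv'] with x' hx'
  exact ((hy x' _).1 (hx'.trans ((hy x _).2 rfl))).symm

theorem contDiff_of_rightInverse {f : X → Y → Z} {g : X → Z → Y} (hn : n ≠ 0)
    (hf : ContDiff 𝕜 n ↿f) (hinj : ∀ x, Injective (f x)) (hg : ∀ x, RightInverse (g x) (f x))
    (hinv : ∀ x y, (fderiv 𝕜 (f x) y).IsInvertible) : ContDiff 𝕜 n ↿g := by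
  refine contDiff_of_forall_apply_eq_iff (f := fun (q : X × Z) y ↦ f q.1 y - q.2) (z := 0) hn
    ?_ (fun q y ↦ ?_) (fun q ↦ ?_)
  · exact (hf.comp (f := fun r : (X × Z) × Y ↦ (r.1.1, r.2)) (by fun_prop)).sub (by fun_prop)
  · rw [sub_eq_zero]
    exact ⟨fun h ↦ hinj q.1 (h.trans (hg q.1 q.2).symm), fun h ↦ h ▸ hg q.1 q.2⟩
  · rw [fderiv_sub_const]
    exact hinv q.1 _

end Implicit

section Convexity

variable {F : Type*} [NormedAddCommGroup F] [NormedSpace ℝ F]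

theorem exists_lt_apply_of_mem_interior_convexHull {s : Set F} {v : F}
    (hv : v ∈ interior (convexHull ℝ s)) {l : F →L[ℝ] ℝ} (hl : l ≠ 0) : ∃ y ∈ s, l v < l y := by
  by_contra! hle
  have hhull : convexHull ℝ s ⊆ {y | l y ≤ l v} :=
    convexHull_min hle (convex_halfSpace_le l.isLinear (l v))
  have hmax : IsLocalMax l v := mem_of_superset (mem_interior_iff_mem_nhds.1 hv) hhull
  exact hl (hmax.hasFDerivAt_eq_zero l.hasFDerivAt)

theorem LoopSurrounds.mem_interior_convexHull {f : ℝ → F} {v : F} (h : LoopSurrounds f v) :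
    v ∈ interior (convexHull ℝ (range f)) := by
  obtain ⟨p, w, hpf, hind, hspan, hw_pos, hw_sum, rfl⟩ := h
  let b : AffineBasis _ ℝ F := ⟨p, hind, hspan⟩
  have hcomb : ∑ i, w i • p i = Finset.univ.affineCombination ℝ b w :=
    (Finset.affineCombination_eq_linear_combination _ p w hw_sum).symm
  have hmem : ∑ i, w i • p i ∈ interior (convexHull ℝ (range p)) := by
    change _ ∈ interior (convexHull ℝ (range b))
    rw [b.interior_convexHull]
    intro i
    rw [hcomb, b.coord_apply_combination_of_mem (Finset.mem_univ i) hw_sum]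
    exact hw_pos i
  exact interior_mono (convexHull_mono (range_subset_iff.2 hpf)) hmem

theorem zero_mem_interior_convexHull_image_sub_iff {ι : Type*} {f : ι → F} {v : F} {s : Set ι} :
    0 ∈ interior (convexHull ℝ ((fun t ↦ f t - v) '' s)) ↔
      v ∈ interior (convexHull ℝ (f '' s)) := by
  have : (fun t ↦ f t - v) '' s = -v +ᵥ f '' s := by
    rw [← image_vadd, image_image]
    simp [vadd_eq_add, sub_eq_neg_add]
  rw [this, convexHull_vadd, interior_vadd, mem_vadd_set_iff_neg_vadd_mem]
  simp

end Convexity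

section FiniteDimensional

variable {V W : Type*} [NormedAddCommGroup V] [NormedSpace ℝ V] [FiniteDimensional ℝ V]

theorem exists_pos_forall_mul_norm_le {N : V → ℝ} (hcont : Continuous N)
    (hhom : ∀ r : ℝ, 0 ≤ r → ∀ v, N (r • v) = r * N v) (hpos : ∀ v ≠ 0, 0 < N v) :
    ∃ c > 0, ∀ v, c * ‖v‖ ≤ N v := by
  obtain ⟨c, hc, hle⟩ := (isCompact_sphere (0 : V) 1).exists_forall_le' hcont.continuousOn
    fun v hv ↦ hpos v (ne_zero_of_mem_unit_sphere ⟨v, hv⟩)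
  refine ⟨c, hc, fun v ↦ ?_⟩
  rcases eq_or_ne v 0 with rfl | hv
  · simpa using (hhom 0 le_rfl 0).ge
  · have hunit := hle (‖v‖⁻¹ • v) (by simp [norm_smul, hv])
    rwa [hhom _ (by positivity), inv_mul_eq_div, le_div_iff₀ (norm_pos_iff.2 hv)] at hunit

theorem isInvertible_of_injective_of_finrank_eq [NormedAddCommGroup W] [NormedSpace ℝ W]
    [FiniteDimensional ℝ W] {A : V →L[ℝ] W} (hA : Injective A)
    (hfinrank : Module.finrank ℝ V = Module.finrank ℝ W) : A.IsInvertible :=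
  ⟨(LinearEquiv.ofInjectiveOfFinrankEq (A : V →ₗ[ℝ] W) hA hfinrank).toContinuousLinearEquiv, rfl⟩

theorem finrank_strongDual : Module.finrank ℝ (StrongDual ℝ V) = Module.finrank ℝ V := by
  rw [← Subspace.dual_finrank_eq (K := ℝ) (V := V)]
  exact (LinearMap.toContinuousLinearMap (𝕜 := ℝ) (E := V) (F' := ℝ)).finrank_eq.symm

end FiniteDimensional

section ExponentialTilting

variable {F : Type*} [NormedAddCommGroup F] [NormedSpace ℝ F]

/-- The partition function `l ↦ ∫₀¹ exp (l (h t)) dt` of the curve `h`: a convex function on the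
dual of `F`, whose minimiser gives the weight under which `h` has mean zero. -/
noncomputable def expEnergy (h : ℝ → F) (l : StrongDual ℝ F) : ℝ :=
  ∫ t in 0..1, Real.exp (l (h t))

/-- The first moment `∫₀¹ exp (l (h t)) h(t) dt` of the curve `h` with respect to the exponential
weight defined by `l`. It is the gradient of `expEnergy h` at `l`. -/
noncomputable def tiltedMoment (h : ℝ → F) (l : StrongDual ℝ F) : F :=
  ∫ t in 0..1, Real.exp (l (h t)) • h t

variable {h : ℝ → F}

theorem continuous_expEnergy (hh : Continuous h) : Continuous (expEnergy h) :=
  intervalIntegral.continuous_parametric_intervalIntegral_of_continuous' (by fun_prop) 0 1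

theorem expEnergy_pos (hh : Continuous h) (l : StrongDual ℝ F) : 0 < expEnergy h l :=
  intervalIntegral.intervalIntegral_pos_of_pos
    ((by fun_prop : Continuous fun t ↦ Real.exp (l (h t))).intervalIntegrable 0 1)
    (fun _ ↦ Real.exp_pos _) one_pos

theorem integral_max_apply_zero_pos (hh : Continuous h)
    (hhull : 0 ∈ interior (convexHull ℝ (h '' Icc 0 1))) {l : StrongDual ℝ F} (hl : l ≠ 0) :
    0 < ∫ t in 0..1, max (l (h t)) 0 := by
  obtain ⟨_, ⟨t, ht, rfl⟩, hlt⟩ := exists_lt_apply_of_mem_interior_convexHull hhull hl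
  refine intervalIntegral.integral_pos one_pos (by fun_prop) (fun _ _ ↦ le_max_right _ _)
    ⟨t, ht, lt_max_of_lt_left ?_⟩
  simpa using hlt

theorem integral_max_apply_zero_le_expEnergy (hh : Continuous h) (l : StrongDual ℝ F) :
    ∫ t in 0..1, max (l (h t)) 0 ≤ expEnergy h l := by
  refine intervalIntegral.integral_mono_on zero_le_one
    (Continuous.intervalIntegrable (by fun_prop) 0 1)
    (Continuous.intervalIntegrable (by fun_prop) 0 1) fun t _ ↦ max_le ?_ (Real.exp_pos _).le
  linarith [Real.add_one_le_exp (l (h t))]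

theorem sub_apply_tiltedMoment_sub_pos [CompleteSpace F] (hh : Continuous h)
    (hhull : 0 ∈ interior (convexHull ℝ (h '' Icc 0 1))) {l l' : StrongDual ℝ F} (hl : l ≠ l') :
    0 < (l - l') (tiltedMoment h l - tiltedMoment h l') := by
  have hint (k : StrongDual ℝ F) :
      IntervalIntegrable (fun t ↦ Real.exp (k (h t)) • h t) volume 0 1 :=
    Continuous.intervalIntegrable (by fun_prop) 0 1
  have hdiff : (l - l') (tiltedMoment h l - tiltedMoment h l') =
      ∫ t in 0..1, (Real.exp (l (h t)) - Real.exp (l' (h t))) * (l (h t) - l' (h t)) := by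
    rw [tiltedMoment, tiltedMoment, ← intervalIntegral.integral_sub (hint l) (hint l'),
      ← (l - l').intervalIntegral_comp_comm ((hint l).sub (hint l'))]
    congr with t
    simp only [← sub_smul, map_smul, smul_eq_mul, sub_apply]
  obtain ⟨_, ⟨t, ht, rfl⟩, hlt⟩ :=
    exists_lt_apply_of_mem_interior_convexHull hhull (sub_ne_zero.2 hl)
  have hlt' : l' (h t) < l (h t) := by simpa using hlt
  rw [hdiff]
  refine intervalIntegral.integral_pos one_pos (by fun_prop) (fun s _ ↦ ?_) ⟨t, ht, ?_⟩
  · exact (Real.exp_monotone.monovary monotone_id).sub_mul_sub_nonneg _ _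
  · exact mul_pos (sub_pos.2 (Real.exp_lt_exp.2 hlt')) (sub_pos.2 hlt')

theorem tiltedMoment_injective [CompleteSpace F] (hh : Continuous h)
    (hhull : 0 ∈ interior (convexHull ℝ (h '' Icc 0 1))) : Injective (tiltedMoment h) := by
  intro l l' heq
  by_contra hl
  simpa [heq] using sub_apply_tiltedMoment_sub_pos hh hhull hl

theorem hasLineDerivAt_expEnergy [CompleteSpace F] (hh : Continuous h) (l m : StrongDual ℝ F) :
    HasLineDerivAt ℝ (expEnergy h) (m (tiltedMoment h l)) l m := by
  have hderiv := hasDerivAt_intervalIntegral_of_continuous_deriv (μ := volume)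
    (f := fun s t ↦ Real.exp ((l + s • m) (h t)))
    (f' := fun s t ↦ Real.exp ((l + s • m) (h t)) * m (h t)) (by fun_prop) (by fun_prop)
    (fun s t ↦ HasDerivAt.exp ?_) 0 1 0
  · have hmoment : m (tiltedMoment h l) = ∫ t in 0..1, m (Real.exp (l (h t)) • h t) :=
      (m.intervalIntegral_comp_comm (Continuous.intervalIntegrable (by fun_prop) 0 1)).symm
    rw [hmoment]
    simpa [HasLineDerivAt, expEnergy] using hderiv
  · simpa using ((hasDerivAt_id s).mul_const (m (h t))).const_add (l (h t))

theorem hasLineDerivAt_tiltedMoment (hh : Continuous h) (l m : StrongDual ℝ F) :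
    HasLineDerivAt ℝ (tiltedMoment h) (∫ t in 0..1, (Real.exp (l (h t)) * m (h t)) • h t) l m := by
  have hderiv := hasDerivAt_intervalIntegral_of_continuous_deriv (μ := volume)
    (f := fun s t ↦ Real.exp ((l + s • m) (h t)) • h t)
    (f' := fun s t ↦ (Real.exp ((l + s • m) (h t)) * m (h t)) • h t) (by fun_prop) (by fun_prop)
    (fun s t ↦ (HasDerivAt.exp ?_).smul_const (h t)) 0 1 0
  · simpa [HasLineDerivAt, tiltedMoment] using hderiv
  · simpa using ((hasDerivAt_id s).mul_const (m (h t))).const_add (l (h t))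

theorem contDiff_tiltedMoment {E : Type*} [NormedAddCommGroup E] [NormedSpace ℝ E] {n : ℕ∞}
    {h : E → ℝ → F} (hh : ContDiff ℝ n ↿h) : ContDiff ℝ n ↿fun x l ↦ tiltedMoment (h x) l := by
  refine contDiff_intervalIntegral
    (f := fun (q : E × StrongDual ℝ F) t ↦ Real.exp (q.2 (h q.1 t)) • h q.1 t) ?_ 0 1
  have hhq : ContDiff ℝ n fun q : (E × StrongDual ℝ F) × ℝ ↦ h q.1.1 q.2 :=
    hh.comp (f := fun q : (E × StrongDual ℝ F) × ℝ ↦ (q.1.1, q.2)) (by fun_prop)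
  exact ((contDiff_fst.snd.clm_apply hhq).exp).smul hhq

theorem apply_fderiv_tiltedMoment [CompleteSpace F] (hh : Continuous h) {l : StrongDual ℝ F}
    (hd : DifferentiableAt ℝ (tiltedMoment h) l) (m : StrongDual ℝ F) :
    m (fderiv ℝ (tiltedMoment h) l m) = ∫ t in 0..1, Real.exp (l (h t)) * m (h t) ^ 2 := by
  have hfderiv : fderiv ℝ (tiltedMoment h) l m =
      ∫ t in 0..1, (Real.exp (l (h t)) * m (h t)) • h t :=
    (hd.hasFDerivAt.hasLineDerivAt m).unique (hasLineDerivAt_tiltedMoment hh l m)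
  rw [hfderiv, ← m.intervalIntegral_comp_comm (Continuous.intervalIntegrable (by fun_prop) 0 1)]
  simp [pow_two, mul_assoc]

theorem apply_fderiv_tiltedMoment_pos [CompleteSpace F] (hh : Continuous h)
    (hhull : 0 ∈ interior (convexHull ℝ (h '' Icc 0 1))) {l m : StrongDual ℝ F}
    (hd : DifferentiableAt ℝ (tiltedMoment h) l) (hm : m ≠ 0) :
    0 < m (fderiv ℝ (tiltedMoment h) l m) := by
  obtain ⟨_, ⟨t, ht, rfl⟩, hlt⟩ := exists_lt_apply_of_mem_interior_convexHull hhull hm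
  have hmt : 0 < m (h t) := by simpa using hlt
  rw [apply_fderiv_tiltedMoment hh hd]
  exact intervalIntegral.integral_pos one_pos (by fun_prop) (fun s _ ↦ by positivity)
    ⟨t, ht, by positivity⟩

variable [FiniteDimensional ℝ F]

theorem tendsto_expEnergy_cocompact (hh : Continuous h)
    (hhull : 0 ∈ interior (convexHull ℝ (h '' Icc 0 1))) :
    Tendsto (expEnergy h) (cocompact (StrongDual ℝ F)) atTop := by
  have hcont : Continuous fun l : StrongDual ℝ F ↦ ∫ t in 0..1, max (l (h t)) 0 :=
    intervalIntegral.continuous_parametric_intervalIntegral_of_continuous' (by fun_prop) 0 1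
  have hhom (r : ℝ) (hr : 0 ≤ r) (l : StrongDual ℝ F) :
      ∫ t in 0..1, max ((r • l) (h t)) 0 = r * ∫ t in 0..1, max (l (h t)) 0 := by
    simp [← intervalIntegral.integral_const_mul, mul_max_of_nonneg _ _ hr]
  obtain ⟨c, hc, hle⟩ := exists_pos_forall_mul_norm_le hcont hhom
    fun l hl ↦ integral_max_apply_zero_pos hh hhull hl
  exact tendsto_atTop_mono (fun l ↦ (hle l).trans (integral_max_apply_zero_le_expEnergy hh l))
    (tendsto_norm_cocompact_atTop.const_mul_atTop hc)

theorem exists_tiltedMoment_eq_zero (hh : Continuous h)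
    (hhull : 0 ∈ interior (convexHull ℝ (h '' Icc 0 1))) :
    ∃ l, tiltedMoment h l = 0 := by
  obtain ⟨l, hl⟩ :=
    (continuous_expEnergy hh).exists_forall_le (tendsto_expEnergy_cocompact hh hhull)
  exact ⟨l, SeparatingDual.eq_zero_of_forall_dual_eq_zero (R := ℝ) fun m ↦
    IsLocalMin.hasLineDerivAt_eq_zero (.of_forall hl) (hasLineDerivAt_expEnergy hh l m)⟩

theorem isInvertible_fderiv_tiltedMoment (hh : Continuous h)
    (hhull : 0 ∈ interior (convexHull ℝ (h '' Icc 0 1))) {l : StrongDual ℝ F}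
    (hd : DifferentiableAt ℝ (tiltedMoment h) l) :
    (fderiv ℝ (tiltedMoment h) l).IsInvertible := by
  refine isInvertible_of_injective_of_finrank_eq
    ((injective_iff_map_eq_zero _).2 fun m hm ↦ ?_) finrank_strongDual
  by_contra hne
  simpa [hm] using apply_fderiv_tiltedMoment_pos hh hhull hd hne

theorem contDiff_of_tiltedMoment_eq_zero {E : Type*} [NormedAddCommGroup E] [NormedSpace ℝ E]
    [CompleteSpace E] {n : ℕ∞} {h : E → ℝ → F} {l : E → StrongDual ℝ F} (hn : n ≠ 0)
    (hh : ContDiff ℝ n ↿h) (hhull : ∀ x, 0 ∈ interior (convexHull ℝ (h x '' Icc 0 1)))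
    (hl : ∀ x, tiltedMoment (h x) (l x) = 0) : ContDiff ℝ n l := by
  have hhx (x : E) : Continuous (h x) := hh.continuous.comp (Continuous.prodMk_right x)
  have hn' : (n : ℕ∞ω) ≠ 0 := by exact_mod_cast hn
  have hd (x : E) : Differentiable ℝ (tiltedMoment (h x)) :=
    ((contDiff_tiltedMoment hh).comp (contDiff_prodMk_right x)).differentiable hn'
  refine contDiff_of_forall_apply_eq_iff hn' (contDiff_tiltedMoment hh) (z := 0)
    (fun x k ↦ ?_) (fun x ↦ isInvertible_fderiv_tiltedMoment (hhx x) (hhull x) (hd x (l x)))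
  rw [← hl x]
  exact (tiltedMoment_injective (hhx x) (hhull x)).eq_iff

end ExponentialTilting

section CircleDensity

/-- A continuous positive probability density on the circle `ℝ / ℤ`, given as a function of period
one on the line. -/
structure IsCircleDensity (ρ : ℝ → ℝ) : Prop where
  continuous : Continuous ρ
  pos : ∀ t, 0 < ρ t
  periodic : Periodic ρ 1
  integral_eq_one : ∫ t in 0..1, ρ t = 1

namespace IsCircleDensity

variable {ρ : ℝ → ℝ}

theorem hasDerivAt_integral (hρ : IsCircleDensity ρ) (t : ℝ) :
    HasDerivAt (fun t ↦ ∫ s in 0..t, ρ s) (ρ t) t :=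
  (hρ.continuous.integral_hasStrictDerivAt 0 t).hasDerivAt

theorem strictMono_integral (hρ : IsCircleDensity ρ) : StrictMono fun t ↦ ∫ s in 0..t, ρ s :=
  strictMono_of_hasDerivAt_pos hρ.hasDerivAt_integral hρ.pos

theorem integral_add_one (hρ : IsCircleDensity ρ) (t : ℝ) :
    ∫ s in 0..(t + 1), ρ s = (∫ s in 0..t, ρ s) + 1 := by
  have h := hρ.periodic.intervalIntegral_add_eq_add 0 t fun a b ↦
    hρ.continuous.intervalIntegrable a b
  simpa [hρ.integral_eq_one] using h

theorem surjective_integral (hρ : IsCircleDensity ρ) : Surjective fun t ↦ ∫ s in 0..t, ρ s := by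
  have hint : IntervalIntegrable ρ volume 0 1 := hρ.continuous.intervalIntegrable 0 1
  exact Continuous.surjective
    (continuous_iff_continuousAt.2 fun t ↦ (hρ.hasDerivAt_integral t).continuousAt)
    (hρ.periodic.tendsto_atTop_intervalIntegral_of_pos' hint hρ.pos one_pos)
    (hρ.periodic.tendsto_atBot_intervalIntegral_of_pos' hint hρ.pos one_pos)

theorem integral_smul_sub (hρ : IsCircleDensity ρ) {G : Type*} [NormedAddCommGroup G]
    [NormedSpace ℝ G] [CompleteSpace G] {f : ℝ → G} (hf : Continuous f) (v : G) :
    ∫ t in 0..1, ρ t • (f t - v) = (∫ t in 0..1, ρ t • f t) - v := by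
  have hρ_cont : Continuous ρ := hρ.continuous
  simp only [smul_sub]
  rw [intervalIntegral.integral_sub (Continuous.intervalIntegrable (by fun_prop) 0 1)
    (Continuous.intervalIntegrable (by fun_prop) 0 1), intervalIntegral.integral_smul_const,
    hρ.integral_eq_one, one_smul]

variable (hρ : IsCircleDensity ρ)

/-- The quantile function of a circle density: the inverse of its primitive `t ↦ ∫₀ᵗ ρ`, as an
increasing bijection of the line. It is the lift of the circle diffeomorphism fixing `0` that
transports Lebesgue measure to the measure with density `ρ`. -/
noncomputable def quantile : ℝ ≃o ℝ :=
  (hρ.strictMono_integral.orderIsoOfSurjective _ hρ.surjective_integral).symm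

theorem integral_quantile (s : ℝ) : ∫ t in 0..hρ.quantile s, ρ t = s :=
  (hρ.strictMono_integral.orderIsoOfSurjective _ hρ.surjective_integral).apply_symm_apply s

theorem quantile_eq_iff {s t : ℝ} : hρ.quantile s = t ↔ ∫ u in 0..t, ρ u = s := by
  rw [← hρ.strictMono_integral.injective.eq_iff]
  simp only [hρ.integral_quantile, eq_comm]

theorem quantile_zero : hρ.quantile 0 = 0 :=
  hρ.quantile_eq_iff.2 intervalIntegral.integral_same

theorem quantile_add_one (s : ℝ) : hρ.quantile (s + 1) = hρ.quantile s + 1 := by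
  rw [hρ.quantile_eq_iff, hρ.integral_add_one, hρ.integral_quantile]

theorem hasDerivAt_quantile (s : ℝ) : HasDerivAt hρ.quantile (ρ (hρ.quantile s))⁻¹ s :=
  (hρ.hasDerivAt_integral _).of_local_left_inverse hρ.quantile.continuous.continuousAt
    (hρ.pos _).ne' (.of_forall hρ.integral_quantile)

theorem deriv_quantile_pos (s : ℝ) : 0 < deriv hρ.quantile s := by
  rw [(hρ.hasDerivAt_quantile s).deriv]
  exact inv_pos.2 (hρ.pos _)

theorem integral_comp_quantile {G : Type*} [NormedAddCommGroup G] [NormedSpace ℝ G]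
    {f : ℝ → G} (hf : Continuous f) :
    ∫ s in 0..1, f (hρ.quantile s) = ∫ t in 0..1, ρ t • f t := by
  have hsubst := intervalIntegral.integral_deriv_smul_comp (a := 0) (b := 1)
    (g := f ∘ hρ.quantile) (fun t _ ↦ hρ.hasDerivAt_integral t) hρ.continuous.continuousOn
    (hf.comp hρ.quantile.continuous)
  have hinv (t : ℝ) : hρ.quantile (∫ s in 0..t, ρ s) = t := hρ.quantile_eq_iff.2 rfl
  simpa [hinv, hρ.integral_eq_one] using hsubst.symm

theorem contDiff_quantile {E : Type*} [NormedAddCommGroup E] [NormedSpace ℝ E] [CompleteSpace E]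
    {n : ℕ∞} {ρ : E → ℝ → ℝ} (hn : n ≠ 0) (hρ : ∀ x, IsCircleDensity (ρ x))
    (hsmooth : ContDiff ℝ n ↿ρ) : ContDiff ℝ n ↿fun x s ↦ (hρ x).quantile s := by
  refine contDiff_of_rightInverse (by exact_mod_cast hn) (contDiff_intervalIntegral_right hsmooth)
    (fun x ↦ (hρ x).strictMono_integral.injective) (fun x ↦ (hρ x).integral_quantile)
    fun x t ↦ ?_
  rw [((hρ x).hasDerivAt_integral t).hasFDerivAt.fderiv]
  exact ⟨.unitsEquivAut ℝ (.mk0 _ ((hρ x).pos t).ne'), by ext; simp⟩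

end IsCircleDensity

end CircleDensity

section TiltedDensity

variable {F : Type*} [NormedAddCommGroup F] [NormedSpace ℝ F]

/-- The exponential weight `exp (l (h t))` normalised to a probability density on `[0, 1]`. -/
noncomputable def tiltedDensity (h : ℝ → F) (l : StrongDual ℝ F) (t : ℝ) : ℝ :=
  Real.exp (l (h t)) / expEnergy h l

variable {h : ℝ → F}

theorem isCircleDensity_tiltedDensity (hh : Continuous h) (hper : Periodic h 1)
    (l : StrongDual ℝ F) : IsCircleDensity (tiltedDensity h l) where
  continuous := by unfold tiltedDensity; fun_prop
  pos t := div_pos (Real.exp_pos _) (expEnergy_pos hh l)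
  periodic t := by simp only [tiltedDensity, hper t]
  integral_eq_one := by
    simp only [tiltedDensity, intervalIntegral.integral_div]
    exact div_self (expEnergy_pos hh l).ne'

theorem integral_tiltedDensity_smul (l : StrongDual ℝ F) :
    ∫ t in 0..1, tiltedDensity h l t • h t = (expEnergy h l)⁻¹ • tiltedMoment h l := by
  simp only [tiltedDensity, tiltedMoment, div_eq_inv_mul, mul_smul,
    intervalIntegral.integral_smul]

theorem contDiff_tiltedDensity {E : Type*} [NormedAddCommGroup E] [NormedSpace ℝ E] {n : ℕ∞}
    {h : E → ℝ → F} {l : E → StrongDual ℝ F} (hh : ContDiff ℝ n ↿h) (hl : ContDiff ℝ n l) :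
    ContDiff ℝ n ↿fun x t ↦ tiltedDensity (h x) (l x) t := by
  have hexp : ContDiff ℝ n ↿fun x t ↦ Real.exp (l x (h x t)) :=
    ((hl.comp contDiff_fst).clm_apply hh).exp
  have hpos (x : E) : 0 < expEnergy (h x) (l x) :=
    expEnergy_pos (hh.continuous.comp (Continuous.prodMk_right x)) (l x)
  exact hexp.div ((contDiff_intervalIntegral hexp 0 1).comp contDiff_fst) fun q ↦ (hpos q.1).ne'

end TiltedDensity

theorem exists_contDiff_circleDensity_integral_smul_eq {E F : Type*}
    [NormedAddCommGroup E] [NormedSpace ℝ E] [CompleteSpace E]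
    [NormedAddCommGroup F] [NormedSpace ℝ F] [FiniteDimensional ℝ F] {n : ℕ∞} (hn : n ≠ 0)
    {γ : E → ℝ → F} {g : E → F} (hγ : ContDiff ℝ n ↿γ) (hper : ∀ x, Periodic (γ x) 1)
    (hg : ContDiff ℝ n g) (hhull : ∀ x, g x ∈ interior (convexHull ℝ (range (γ x)))) :
    ∃ ρ : E → ℝ → ℝ, ContDiff ℝ n ↿ρ ∧ (∀ x, IsCircleDensity (ρ x)) ∧
      ∀ x, ∫ t in 0..1, ρ x t • γ x t = g x := by
  have hγx (x : E) : Continuous (γ x) := hγ.continuous.comp (Continuous.prodMk_right x)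
  let h x t := γ x t - g x
  have hh : ContDiff ℝ n ↿h := hγ.sub (hg.comp contDiff_fst)
  have hhx (x : E) : Continuous (h x) := (hγx x).sub continuous_const
  have hh_per (x : E) : Periodic (h x) 1 := fun t ↦ by simp [h, hper x t]
  have hh_hull (x : E) : 0 ∈ interior (convexHull ℝ (h x '' Icc 0 1)) := by
    rw [zero_mem_interior_convexHull_image_sub_iff, ← zero_add (1 : ℝ),
      (hper x).image_Icc one_pos 0]
    exact hhull x
  choose l hl using fun x ↦ exists_tiltedMoment_eq_zero (hhx x) (hh_hull x)
  have hl_smooth : ContDiff ℝ n l := contDiff_of_tiltedMoment_eq_zero hn hh hh_hull hl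
  have hρ (x : E) := isCircleDensity_tiltedDensity (hhx x) (hh_per x) (l x)
  refine ⟨fun x ↦ tiltedDensity (h x) (l x), contDiff_tiltedDensity hh hl_smooth, hρ, fun x ↦ ?_⟩
  have hmean : ∫ t in 0..1, tiltedDensity (h x) (l x) t • h x t = 0 := by
    rw [integral_tiltedDensity_smul, hl, smul_zero]
  exact sub_eq_zero.1 (((hρ x).integral_smul_sub (hγx x) (g x)).symm.trans hmean)

theorem exists_reparametrisation_general {E F : Type*}
    [NormedAddCommGroup E] [NormedSpace ℝ E] [CompleteSpace E]
    [NormedAddCommGroup F] [NormedSpace ℝ F] [FiniteDimensional ℝ F] {n : ℕ∞} (hn : n ≠ 0)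
    {γ : E → ℝ → F} {g : E → F} (hγ : ContDiff ℝ n ↿γ) (hper : ∀ x, Periodic (γ x) 1)
    (hg : ContDiff ℝ n g) (hhull : ∀ x, g x ∈ interior (convexHull ℝ (range (γ x)))) :
    ∃ φ : E → ℝ → ℝ,
      ContDiff ℝ n ↿φ ∧
      (∀ x, φ x 0 = 0) ∧
      (∀ x s, φ x (s + 1) = φ x s + 1) ∧
      (∀ x s, 0 < deriv (φ x) s) ∧
      ∀ x, (∫ s in (0 : ℝ)..1, γ x (φ x s)) = g x := by
  obtain ⟨ρ, hρ_smooth, hρ, hmean⟩ :=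
    exists_contDiff_circleDensity_integral_smul_eq hn hγ hper hg hhull
  refine ⟨fun x ↦ (hρ x).quantile, IsCircleDensity.contDiff_quantile hn hρ hρ_smooth,
    fun x ↦ (hρ x).quantile_zero, fun x ↦ (hρ x).quantile_add_one,
    fun x ↦ (hρ x).deriv_quantile_pos, fun x ↦ ?_⟩
  have hγx : Continuous (γ x) := hγ.continuous.comp (Continuous.prodMk_right x)
  exact ((hρ x).integral_comp_quantile hγx).trans (hmean x)

/-- Reparametrisation lemma: given a smooth family of loops `γ` such that `γ x`
surrounds `g x` for all `x`, there is a smooth family of circle diffeomorphisms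
`φ x` fixing `0` such that `γ x ∘ φ x` has average `g x`. -/
theorem exists_reparametrisation {E F : Type*}
    [NormedAddCommGroup E] [NormedSpace ℝ E] [FiniteDimensional ℝ E]
    [NormedAddCommGroup F] [NormedSpace ℝ F] [FiniteDimensional ℝ F]
    {γ : E → ℝ → F} {g : E → F}
    (hγ : ContDiff ℝ ∞ ↿γ) (hper : ∀ x, Function.Periodic (γ x) 1)
    (hg : ContDiff ℝ ∞ g) (hsur : ∀ x, LoopSurrounds (γ x) (g x)) :
    ∃ φ : E → ℝ → ℝ,
      ContDiff ℝ ∞ ↿φ ∧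
      (∀ x, φ x 0 = 0) ∧
      (∀ x s, φ x (s + 1) = φ x s + 1) ∧
      (∀ x s, 0 < deriv (φ x) s) ∧
      ∀ x, (∫ s in (0 : ℝ)..1, γ x (φ x s)) = g x :=
  exists_reparametrisation_general (by simp) hγ hper hg fun x ↦ (hsur x).mem_interior_convexHull
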